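/- The restriction of the map κ(μ) = −Σ_{(p,q)∈μ} α_{q−p mod r} to r-cores coincides with the charge-vector bijection from r-cores to the sl_r root lattice; in particular κ restricted to r-cores is a bijection onto Q. -/

import Mathlib

/-- A function `ℕ → ℕ` is (the sequence of parts of) a partition. -/
def IsPartitionFun (f : ℕ → ℕ) : Prop :=
  (∀ i j : ℕ, i ≤ j → f j ≤ f i) ∧ ∃ n : ℕ, ∀ i : ℕ, n ≤ i → f i = 0

/-- The number of `0`'s of an edge sequence lying above position `j`. -/
noncomputable def numZerosAbove (b : ℤ → Prop) (j : ℤ) : ℕ :=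
  Nat.card {i : ℤ // j < i ∧ ¬ b i}

/-- The shape of an edge sequence. -/
noncomputable def esShape (b : ℤ → Prop) (k : ℕ) : ℕ :=
  Nat.card {j : ℤ // b j ∧ k + 1 ≤ numZerosAbove b j}

/-- The charge of an edge sequence. -/
noncomputable def esCharge (b : ℤ → Prop) : ℤ :=
  (Nat.card {i : ℤ // i < 0 ∧ b i} : ℤ) - (Nat.card {i : ℤ // 0 ≤ i ∧ ¬ b i} : ℤ)

/-- The `j`-th part of the conjugate partition of `f` (`j ≥ 1`). -/
noncomputable def conjCount (f : ℕ → ℕ) (j : ℕ) : ℕ :=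
  Nat.card {i : ℕ // j ≤ f i}

/-- The partition `f` has a box of hook length `n`. -/
def HasHook (f : ℕ → ℕ) (n : ℕ) : Prop :=
  ∃ a j : ℕ, 1 ≤ j ∧ j ≤ f a ∧ (f a - j) + (conjCount f j - (a + 1)) + 1 = n

/-- The canonical (total charge zero) edge sequence encoding of a partition `f`. -/
def edgeOf (f : ℕ → ℕ) (i : ℤ) : Prop :=
  ∃ k : ℕ, i = (k : ℤ) - (conjCount f (k + 1) : ℤ)

/-- The residue-`c` box count of a partition: the number of boxes whose residue
(mod `r`) is `c`; boxes are indexed from `0`. -/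
noncomputable def residueCount (r : ℕ) (f : ℕ → ℕ) (c : ZMod r) : ℕ :=
  Nat.card {x : ℕ × ℕ // x.2 < f x.1 ∧ (((x.1 : ℤ) - (x.2 : ℤ) : ℤ) : ZMod r) = c}

/-- The map `κ(μ) = -∑_{boxes of μ} α_{residue}` into the `sl_r` root lattice
`Q = {v : ZMod r → ℤ | ∑ v = 0}`, where `α_i = ε_{i-1} - ε_i`; concretely, the `c`-th
coordinate of `κ(μ)` is `(# boxes of residue c) - (# boxes of residue c+1)`. -/
noncomputable def kappa (r : ℕ) (f : ℕ → ℕ) : ZMod r → ℤ :=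
  fun c => (residueCount r f c : ℤ) - (residueCount r f (c + 1) : ℤ)

/-- The charge vector of a partition: the vector of charges of the `r` runners of its
charge-zero edge sequence (labelled compatibly with `κ`). -/
noncomputable def chargeVec (r : ℕ) [NeZero r] (f : ℕ → ℕ) : ZMod r → ℤ :=
  fun c => esCharge (fun j : ℤ => edgeOf f (r * j + (((-1 - c : ZMod r)).val : ℤ)))

section Helpers

theorem lt_conj_iff {f : ℕ → ℕ} (hf : IsPartitionFun f) (a k : ℕ) :
    a < conjCount f (k + 1) ↔ k < f a := by
  obtain ⟨hm, n, hn⟩ := hf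
  have hex : ∃ m, f m ≤ k := ⟨n, by rw [hn n le_rfl]; omega⟩
  classical
  have key : ∀ i, i ∈ Finset.range (Nat.find hex) ↔ k + 1 ≤ f i := by
    intro i
    rw [Finset.mem_range]
    constructor
    · intro h
      have := Nat.find_min hex h
      omega
    · intro h
      by_contra h'
      have h1 := hm _ _ (not_lt.mp h')
      have h2 := Nat.find_spec hex
      omega
  have hc : conjCount f (k + 1) = Nat.find hex := by
    unfold conjCount
    rw [Nat.subtype_card _ key, Finset.card_range]
  rw [hc, ← Finset.mem_range, key]
  omega

theorem not_edge_iff {f : ℕ → ℕ} (hf : IsPartitionFun f) (x : ℤ) :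
    ¬ edgeOf f x ↔ ∃ a : ℕ, x = (f a : ℤ) - 1 - a := by
  classical
  constructor
  · intro h
    by_contra hne
    apply h
    push Not at hne
    obtain ⟨n, hn⟩ := hf.2
    have hex : ∃ a : ℕ, (f a : ℤ) - 1 - a ≤ x := by
      refine ⟨n + (-x).toNat, ?_⟩
      rw [hn _ (by omega)]
      omega
    have hs := Nat.find_spec hex
    have hmin := fun m => @Nat.find_min _ _ hex m
    generalize Nat.find hex = a at hs hmin
    have hne' := hne a
    have hge : (f a : ℤ) ≤ x + a := by omega
    obtain ⟨k, hk⟩ : ∃ k : ℕ, (k : ℤ) = x + a := ⟨(x + a).toNat, by omega⟩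
    refine ⟨k, ?_⟩
    have h1 := lt_conj_iff hf a k
    have h2 : a ≤ conjCount f (k + 1) := by
      rcases a with _ | a
      · omega
      · have h3 := hmin a (by omega)
        have h4 := lt_conj_iff hf a k
        push_cast at *
        have : k < f a := by omega
        have := h4.mpr this
        omega
    have h3 : ¬ (k < f a) := by omega
    have h4 : ¬ a < conjCount f (k + 1) := fun h => h3 (h1.mp h)
    omega
  · rintro ⟨a, ha⟩ ⟨k, hk⟩
    have h1 := lt_conj_iff hf a k
    by_cases h : k < f a
    · have := h1.mpr h
      omega
    · have : ¬ a < conjCount f (k + 1) := fun h' => h (h1.mp h')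
      omega

theorem core_iff {f : ℕ → ℕ} (hf : IsPartitionFun f) (r : ℕ) (hr : 0 < r) :
    ¬ HasHook f r ↔ ∀ x, edgeOf f x → edgeOf f (x + r) := by
  constructor
  · rintro h x ⟨k, hk⟩
    by_contra hx
    obtain ⟨a, ha⟩ := (not_edge_iff hf _).mp hx
    apply h
    have h1 := lt_conj_iff hf a k
    have h2 : k < f a := by
      by_contra h2
      have : ¬ a < conjCount f (k + 1) := fun h' => h2 (h1.mp h')
      omega
    have h3 := h1.mpr h2
    exact ⟨a, k + 1, by omega, by omega, by omega⟩
  · rintro h ⟨a, j, hj, hja, hh⟩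
    obtain ⟨k, rfl⟩ : ∃ k, j = k + 1 := ⟨j - 1, by omega⟩
    have h1 := (lt_conj_iff hf a k).mpr (by omega)
    have h2 := h _ ⟨k, rfl⟩
    exact (not_edge_iff hf _).mpr ⟨a, by omega⟩ h2

theorem esCharge_ge (b : ℤ → Prop) (m : ℤ) (hb : ∀ j, b j ↔ m ≤ j) : esCharge b = -m := by
  unfold esCharge
  rw [Nat.subtype_card (Finset.Ico m 0) (by intro x; simp [hb]; tauto),
    Nat.subtype_card (Finset.Ico 0 m) (by intro x; simp [hb])]
  simp
  omega

theorem up_closed (b : ℤ → Prop) (h1 : ∀ j, b j → b (j + 1)) (L U : ℤ)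
    (hL : ∀ j, j < L → ¬ b j) (hU : ∀ j, U ≤ j → b j) : ∃ m, ∀ j, b j ↔ m ≤ j := by
  obtain ⟨m, hm, hmin⟩ := Int.exists_least_of_bdd (P := b)
    ⟨L, fun z hz => by by_contra h; exact hL z (by omega) hz⟩ ⟨U, hU U le_rfl⟩
  refine ⟨m, fun j => ⟨hmin j, fun h => ?_⟩⟩
  exact Int.le_induction hm (fun n _ ih => h1 n ih) j h

theorem residueCount_eq (r : ℕ) {f : ℕ → ℕ} (n : ℕ) (hn : ∀ i, n ≤ i → f i = 0) (c : ZMod r) :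
    (residueCount r f c : ℤ) = ∑ a ∈ Finset.range n, ∑ q ∈ Finset.range (f a),
      if (((a : ℤ) - (q : ℤ) : ℤ) : ZMod r) = c then (1 : ℤ) else 0 := by
  classical
  unfold residueCount
  rw [Nat.subtype_card (((Finset.range n).sigma (fun a => Finset.range (f a))).filter
      (fun x => (((x.1 : ℤ) - (x.2 : ℤ) : ℤ) : ZMod r) = c) |>.map
        (Equiv.sigmaEquivProd ℕ ℕ).toEmbedding)]
  · rw [Finset.card_map, Finset.card_filter, Finset.sum_sigma]
    push_cast
    rfl
  · rintro ⟨a, q⟩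
    simp only [Finset.mem_map, Finset.mem_filter, Finset.mem_sigma, Finset.mem_range]
    constructor
    · rintro ⟨⟨a', q'⟩, ⟨⟨h1, h2⟩, h3⟩, h4⟩
      simp at h4
      obtain ⟨rfl, rfl⟩ := h4
      exact ⟨h2, h3⟩
    · rintro ⟨h1, h2⟩
      refine ⟨⟨a, q⟩, ⟨⟨?_, h1⟩, h2⟩, rfl⟩
      by_contra h
      have := hn a (by simpa using h)
      omega

theorem kappa_eq (r : ℕ) {f : ℕ → ℕ} (n : ℕ) (hn : ∀ i, n ≤ i → f i = 0) (c : ZMod r) :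
    kappa r f c = ∑ a ∈ Finset.range n, ((if ((a : ℤ) : ZMod r) = c then (1 : ℤ) else 0) -
      if (((a : ℤ) - f a : ℤ) : ZMod r) = c then (1 : ℤ) else 0) := by
  unfold kappa
  rw [residueCount_eq r n hn, residueCount_eq r n hn, ← Finset.sum_sub_distrib]
  refine Finset.sum_congr rfl fun a _ => ?_
  rw [← Finset.sum_sub_distrib]
  have := Finset.sum_range_sub' (fun q : ℕ =>
    if (((a : ℤ) - (q : ℤ) : ℤ) : ZMod r) = c then (1 : ℤ) else 0) (f a)
  simp only [Nat.cast_zero, sub_zero] at this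
  rw [← this]
  refine Finset.sum_congr rfl fun q _ => ?_
  congr 2
  push_cast
  rw [← sub_sub, sub_eq_iff_eq_add (b := (1 : ZMod r))]

theorem cast_iff (r : ℕ) [NeZero r] (c : ZMod r) (y : ℤ) :
    ((y : ℤ) : ZMod r) = c ↔ ∃ j : ℤ, -1 - y = r * j + (((-1 - c : ZMod r)).val : ℤ) := by
  constructor
  · intro h
    have h2 : ((-1 - y - ((-1 - c : ZMod r)).val : ℤ) : ZMod r) = 0 := by
      push_cast
      rw [ZMod.natCast_zmod_val, h]
      ring
    obtain ⟨j, hj⟩ := (ZMod.intCast_zmod_eq_zero_iff_dvd _ _).mp h2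
    exact ⟨j, by omega⟩
  · rintro ⟨j, hj⟩
    have h2 := congrArg (fun z : ℤ => (z : ZMod r)) hj
    push_cast at h2
    rw [ZMod.natCast_zmod_val, ZMod.natCast_self] at h2
    linear_combination -h2

theorem kappa_eq_chargeVec (r : ℕ) [NeZero r] {f : ℕ → ℕ} (hf : IsPartitionFun f) :
    kappa r f = chargeVec r f := by
  classical
  funext c
  have hr : (0 : ℤ) < r := by exact_mod_cast Nat.pos_of_ne_zero (NeZero.ne r)
  obtain ⟨n, hn⟩ := hf.2
  rw [kappa_eq r n hn, Finset.sum_sub_distrib]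
  unfold chargeVec esCharge
  have hs0 : (0 : ℤ) ≤ (((-1 - c : ZMod r)).val : ℤ) := by positivity
  have hs1 : (((-1 - c : ZMod r)).val : ℤ) < r := by exact_mod_cast ZMod.val_lt _
  have hcast := cast_iff r c
  generalize (((-1 - c : ZMod r)).val : ℤ) = s at *
  have hf0 : ∀ a, f a ≤ f 0 := fun a => hf.1 0 a (Nat.zero_le a)
  -- the relevant window
  let T : Finset ℤ := Finset.Icc (-(n : ℤ) - 1) (f 0 + 1)
  have hT : ∀ j : ℤ, -(n : ℤ) ≤ r * j + s → r * j + s ≤ f 0 → j ∈ T := by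
    intro j h1 h2
    simp only [T, Finset.mem_Icc]
    constructor
    · by_contra h
      have : r * j ≤ r * (-(n : ℤ) - 2) := mul_le_mul_of_nonneg_left (by omega) hr.le
      nlinarith
    · by_contra h
      have : r * ((f 0 : ℤ) + 1) ≤ r * j := mul_le_mul_of_nonneg_left (by omega) hr.le
      nlinarith
  have hlow : ∀ x : ℤ, x < -n → ¬ edgeOf f x := by
    intro x hx
    rw [not_edge_iff hf]
    refine ⟨(-1 - x).toNat, ?_⟩
    rw [hn _ (by omega)]
    omega
  have hhigh : ∀ x : ℤ, ¬ edgeOf f x → x ≤ f 0 := by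
    intro x hx
    obtain ⟨a, ha⟩ := (not_edge_iff hf _).mp hx
    have := hf0 a
    omega
  have hneg : ∀ j : ℤ, j < 0 → r * j + s < 0 := by
    intro j hj
    have : r * j ≤ r * (-1) := mul_le_mul_of_nonneg_left (by omega) hr.le
    linarith
  have hpos : ∀ j : ℤ, 0 ≤ j → 0 ≤ r * j + s := by
    intro j hj
    have := mul_nonneg hr.le hj
    linarith
  have hinj : ∀ j j' : ℤ, r * j + s = r * j' + s → j = j' := by
    intro j j' h
    exact mul_left_cancel₀ hr.ne' (by linarith)
  rw [Nat.subtype_card (T.filter fun j => j < 0 ∧ edgeOf f (r * j + s)),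
    Nat.subtype_card (T.filter fun j => 0 ≤ j ∧ ¬ edgeOf f (r * j + s))]
  rotate_left
  · intro j
    simp only [Finset.mem_filter, and_iff_right_iff_imp]
    rintro ⟨h1, h2⟩
    exact hT j (by have := hpos j h1; omega) (hhigh _ h2)
  · intro j
    simp only [Finset.mem_filter, and_iff_right_iff_imp]
    rintro ⟨h1, h2⟩
    refine hT j ?_ (by have := hneg j h1; omega)
    by_contra h
    exact hlow _ (by omega) h2
  have hU : (∑ a ∈ Finset.range n, if ((a : ℤ) : ZMod r) = c then (1 : ℤ) else 0) =
      ((T.filter fun j => j < 0 ∧ -(n : ℤ) ≤ r * j + s).card : ℤ) := by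
    rw [Finset.sum_boole]
    norm_cast
    symm
    refine Finset.card_bij (fun j _ => (-1 - (r * j + s)).toNat) ?_ ?_ ?_
    · intro j hj
      simp only [Finset.mem_filter, Finset.mem_range] at hj ⊢
      have := hneg j hj.2.1
      have h3 := hj.2.2
      refine ⟨by omega, ?_⟩
      have := (hcast ((-1 - (r * j + s)).toNat)).mpr ⟨j, by omega⟩
      exact_mod_cast this
    · intro j hj j' hj' h
      simp only [Finset.mem_filter] at hj hj'
      have := hneg j hj.2.1
      have := hneg j' hj'.2.1
      exact hinj _ _ (by omega)
    · intro a ha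
      simp only [Finset.mem_filter, Finset.mem_range] at ha
      obtain ⟨j, hj⟩ := (hcast a).mp (by exact_mod_cast ha.2)
      have h0 : j < 0 := by
        by_contra h
        have := hpos j (by omega)
        omega
      refine ⟨j, ?_, by omega⟩
      simp only [Finset.mem_filter]
      exact ⟨hT j (by omega) (by omega), h0, by omega⟩
  have hV : (∑ a ∈ Finset.range n, if (((a : ℤ) - f a : ℤ) : ZMod r) = c then (1 : ℤ) else 0) =
      ((T.filter fun j => -(n : ℤ) ≤ r * j + s ∧ ¬ edgeOf f (r * j + s)).card : ℤ) := by
    rw [Finset.sum_boole]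
    refine congrArg Nat.cast ?_
    have hex : ∀ a ∈ (Finset.range n).filter (fun a : ℕ => (((a : ℤ) - f a : ℤ) : ZMod r) = c),
        ∃ j : ℤ, -1 - ((a : ℤ) - f a) = r * j + s := by
      intro a ha
      simp only [Finset.mem_filter] at ha
      exact (hcast _).mp ha.2
    choose! g hg using hex
    refine Finset.card_bij (fun a _ => g a) ?_ ?_ ?_
    · intro a ha
      have h1 := hg a ha
      simp only [Finset.mem_filter, Finset.mem_range] at ha ⊢
      have h2 := hf0 a
      refine ⟨hT _ (by omega) (by omega), by omega, ?_⟩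
      rw [not_edge_iff hf]
      exact ⟨a, by omega⟩
    · intro a ha a' ha' h
      have h1 := hg a ha
      have h2 := hg a' ha'
      rw [h] at h1
      rcases le_total a a' with h3 | h3
      · have := hf.1 _ _ h3
        omega
      · have := hf.1 _ _ h3
        omega
    · intro j hj
      simp only [Finset.mem_filter] at hj
      obtain ⟨a, ha⟩ := (not_edge_iff hf _).mp hj.2.2
      have han : a < n := by
        by_contra h
        have := hn a (by omega)
        omega
      have hmem : a ∈ (Finset.range n).filter (fun a : ℕ => (((a : ℤ) - f a : ℤ) : ZMod r) = c) := by
        simp only [Finset.mem_filter, Finset.mem_range]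
        exact ⟨han, (hcast _).mpr ⟨j, by omega⟩⟩
      refine ⟨a, hmem, ?_⟩
      have := hg a hmem
      exact hinj _ _ (by omega)
  rw [hU, hV]
  simp only [Finset.card_filter]
  push_cast
  rw [← Finset.sum_sub_distrib, ← Finset.sum_sub_distrib]
  refine Finset.sum_congr rfl fun j _ => ?_
  have h1 := hlow (r * j + s)
  have h2 := hpos j
  by_cases hj : j < 0 <;> by_cases he : edgeOf f (r * j + s) <;>
    by_cases hl : -(n : ℤ) ≤ r * j + s
  all_goals first
    | (exfalso; exact h1 (by omega) he)
    | (exfalso; have := h2 (by omega); omega)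
    | simp [hj, he, hl]
  all_goals omega

theorem core_edge (r : ℕ) [NeZero r] {f : ℕ → ℕ} (hf : IsPartitionFun f) (hc : ¬ HasHook f r)
    (c : ZMod r) (j : ℤ) :
    edgeOf f (r * j + (((-1 - c : ZMod r)).val : ℤ)) ↔ -chargeVec r f c ≤ j := by
  have hr : (0 : ℤ) < r := by exact_mod_cast Nat.pos_of_ne_zero (NeZero.ne r)
  obtain ⟨n, hn⟩ := hf.2
  have hs0 : (0 : ℤ) ≤ (((-1 - c : ZMod r)).val : ℤ) := by positivity
  have hs1 : (((-1 - c : ZMod r)).val : ℤ) < r := by exact_mod_cast ZMod.val_lt _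
  have hcl := (core_iff hf r (Nat.pos_of_ne_zero (NeZero.ne r))).mp hc
  obtain ⟨m, hm⟩ := up_closed (fun j : ℤ => edgeOf f (r * j + (((-1 - c : ZMod r)).val : ℤ)))
    (by
      intro j hj
      have := hcl _ hj
      convert this using 1
      ring) (-(n : ℤ) - 1) (f 0 + 1)
    (by
      intro j hj
      rw [not_edge_iff hf]
      have h3 : r * j + (((-1 - c : ZMod r)).val : ℤ) < -n := by
        have : r * j ≤ r * (-(n : ℤ) - 2) := mul_le_mul_of_nonneg_left (by omega) hr.le
        nlinarith
      refine ⟨(-1 - (r * j + (((-1 - c : ZMod r)).val : ℤ))).toNat, ?_⟩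
      rw [hn _ (by omega)]
      omega)
    (by
      intro j hj
      by_contra h
      obtain ⟨a, ha⟩ := (not_edge_iff hf _).mp h
      have := hf.1 0 a (Nat.zero_le a)
      have : r * ((f 0 : ℤ) + 1) ≤ r * j := mul_le_mul_of_nonneg_left (by omega) hr.le
      nlinarith)
  have : chargeVec r f c = -m := esCharge_ge _ m hm
  rw [this, neg_neg]
  exact hm j

theorem edge_inj {f g : ℕ → ℕ} (hf : IsPartitionFun f) (hg : IsPartitionFun g)
    (h : ∀ x, edgeOf f x ↔ edgeOf g x) : f = g := by
  have hmono : ∀ {f : ℕ → ℕ}, IsPartitionFun f → StrictMono (fun a : ℕ => (a : ℤ) - f a) := by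
    intro f hf
    refine strictMono_nat_of_lt_succ fun a => ?_
    have := hf.1 a (a + 1) (by omega)
    push_cast
    omega
  have hr : Set.range (fun a : ℕ => (a : ℤ) - f a) = Set.range (fun a : ℕ => (a : ℤ) - g a) := by
    ext x
    have h1 := not_edge_iff hf (-1 - x)
    have h2 := not_edge_iff hg (-1 - x)
    rw [h, h2] at h1
    constructor
    · rintro ⟨a, ha⟩
      obtain ⟨b, hb⟩ := h1.mpr ⟨a, by simp only at ha; omega⟩
      exact ⟨b, by simp only; omega⟩
    · rintro ⟨a, ha⟩
      obtain ⟨b, hb⟩ := h1.mp ⟨a, by simp only at ha; omega⟩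
      exact ⟨b, by simp only; omega⟩
  have := (StrictMono.range_inj (hmono hf) (hmono hg)).mp hr
  funext a
  have := congrFun this a
  omega

theorem sum_range_mul' (F : ℕ → ℤ) (n r : ℕ) :
    ∑ m ∈ Finset.range (n * r), F m =
      ∑ i ∈ Finset.range n, ∑ t ∈ Finset.range r, F (i * r + t) := by
  induction n with
  | zero => simp
  | succ n ih => rw [Nat.succ_mul, Finset.sum_range_add, ih, Finset.sum_range_succ]

/-- Build a partition from a balanced set. -/
theorem exists_partition (B : ℤ → Prop) [DecidablePred B] (N : ℕ)
    (hhi : ∀ x : ℤ, (N : ℤ) ≤ x → B x)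
    (hlo : ∀ x : ℤ, x < -(N : ℤ) → ¬ B x)
    (hcount : Nat.count (fun m : ℕ => ¬ B ((N : ℤ) - 1 - m)) (2 * N) = N) :
    ∃ f, IsPartitionFun f ∧ ∀ x, edgeOf f x ↔ B x := by
  set p : ℕ → Prop := fun m : ℕ => ¬ B ((N : ℤ) - 1 - m) with hp
  have hpl : ∀ m, 2 * N ≤ m → p m := fun m hm => hlo _ (by omega)
  have hinf : (setOf p).Infinite := by
    refine Set.infinite_of_not_bddAbove ?_
    rintro ⟨M, hM⟩
    have := hM (hpl (2 * N + M + 1) (by omega))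
    omega
  have hcnt : ∀ d, Nat.count p (2 * N + d) = N + d := by
    intro d
    induction d with
    | zero => exact hcount
    | succ d ih =>
      rw [← add_assoc, Nat.count_succ, ih, if_pos (hpl _ (by omega))]
      omega
  have hnth : ∀ d, Nat.nth p (N + d) = 2 * N + d := by
    intro d
    rw [← hcnt d]
    exact Nat.nth_count (hpl _ (by omega))
  have hsm := Nat.nth_strictMono hinf
  have hstep : ∀ a d, Nat.nth p a + d ≤ Nat.nth p (a + d) := by
    intro a d
    induction d with
    | zero => simp
    | succ d ih =>
      have := hsm (show a + d < a + (d + 1) by omega)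
      omega
  have hle : ∀ a, Nat.nth p a ≤ N + a := by
    intro a
    have h1 := hstep a N
    have h2 := hnth a
    rw [add_comm a N, h2] at h1
    omega
  refine ⟨fun a => N + a - Nat.nth p a, ?_, ?_⟩
  · refine ⟨fun i j hij => ?_, N, fun i hi => ?_⟩
    · have := hstep i (j - i)
      rw [show i + (j - i) = j by omega] at this
      have := hle i
      have := hle j
      simp only
      omega
    · have := hnth (i - N)
      rw [show N + (i - N) = i by omega] at this
      simp only
      omega
  · have hpf : IsPartitionFun (fun a => N + a - Nat.nth p a) := by
      refine ⟨fun i j hij => ?_, N, fun i hi => ?_⟩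
      · have := hstep i (j - i)
        rw [show i + (j - i) = j by omega] at this
        have := hle i
        have := hle j
        simp only
        omega
      · have := hnth (i - N)
        rw [show N + (i - N) = i by omega] at this
        simp only
        omega
    intro x
    rw [← not_iff_not, not_edge_iff hpf]
    constructor
    · rintro ⟨a, ha⟩
      have h1 := Nat.nth_mem_of_infinite hinf a
      have h2 := hle a
      simp only [hp] at h1
      have : (N : ℤ) - 1 - (Nat.nth p a : ℤ) = x := by
        rw [ha]
        push_cast [h2]
        ring
      rw [← this]
      exact h1
    · intro hx
      have hxN : x < N := by
        by_contra h
        exact hx (hhi x (by omega))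
      obtain ⟨m, hm⟩ : ∃ m : ℕ, (m : ℤ) = N - 1 - x := ⟨(N - 1 - x).toNat, by omega⟩
      have hpm : p m := by
        simp only [hp]
        rw [hm]
        convert hx using 2
        ring
      refine ⟨Nat.count p m, ?_⟩
      have h2 := hle (Nat.count p m)
      have h3 := Nat.nth_count hpm
      rw [h3] at h2
      simp only [h3]
      push_cast [h2]
      omega

theorem exists_core (r : ℕ) [NeZero r] (v : ZMod r → ℤ) (hv : ∑ i, v i = 0) :
    ∃ f, IsPartitionFun f ∧ ¬ HasHook f r ∧ chargeVec r f = v := by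
  classical
  have hr0 : 0 < r := Nat.pos_of_ne_zero (NeZero.ne r)
  have hr : (0 : ℤ) < r := by exact_mod_cast hr0
  let B : ℤ → Prop := fun x => -v (-1 - (x : ZMod r)) ≤ x / r
  obtain ⟨M, hM⟩ : ∃ M : ℕ, ∀ c, |v c| ≤ M := by
    refine ⟨(∑ c, |v c|).toNat, fun c => ?_⟩
    have := Finset.single_le_sum (f := fun c => |v c|) (fun i _ => abs_nonneg (v i))
      (Finset.mem_univ c)
    omega
  have hB : ∀ (c : ZMod r) (j : ℤ), B (r * j + (((-1 - c : ZMod r)).val : ℤ)) ↔ -v c ≤ j := by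
    intro c j
    have hs0 : (0 : ℤ) ≤ (((-1 - c : ZMod r)).val : ℤ) := by positivity
    have hs1 : (((-1 - c : ZMod r)).val : ℤ) < r := by exact_mod_cast ZMod.val_lt _
    simp only [B]
    have h1 : (r * j + (((-1 - c : ZMod r)).val : ℤ)) / r = j := by
      rw [add_comm, Int.add_mul_ediv_left _ _ hr.ne', Int.ediv_eq_zero_of_lt hs0 hs1, zero_add]
    rw [h1]
    push_cast
    rw [ZMod.natCast_zmod_val, ZMod.natCast_self]
    simp
  obtain ⟨f, hf, hfB⟩ := exists_partition B (M * r)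
    (by
      intro x hx
      have h1 : (M : ℤ) ≤ x / r := (Int.le_ediv_iff_mul_le hr).mpr (by push_cast at hx; exact hx)
      have := abs_le.mp (hM (-1 - (x : ZMod r)))
      simp only [B]
      omega)
    (by
      intro x hx
      have h1 : x / r < -(M : ℤ) := (Int.ediv_lt_iff_lt_mul hr).mpr (by push_cast at hx; linarith)
      have := abs_le.mp (hM (-1 - (x : ZMod r)))
      simp only [B]
      omega)
    (by
      zify
      rw [Nat.count_eq_card_filter_range, Finset.card_filter, ← mul_assoc]
      push_cast
      rw [sum_range_mul', Finset.sum_comm]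
      have hrow : ∀ t ∈ Finset.range r, (∑ i ∈ Finset.range (2 * M),
          if ¬ B ((M : ℤ) * r - 1 - ((i * r + t : ℕ) : ℤ)) then (1 : ℤ) else 0)
            = M - v (t : ZMod r) := by
        intro t ht
        rw [Finset.mem_range] at ht
        have hval : (((-1 - (t : ZMod r) : ZMod r)).val : ℤ) = r - 1 - t := by
          have : (-1 - (t : ZMod r) : ZMod r) = ((r - 1 - t : ℕ) : ZMod r) := by
            rw [Nat.sub_sub, Nat.cast_sub (by omega)]
            push_cast
            rw [ZMod.natCast_self]
            ring
          rw [this, ZMod.val_natCast_of_lt (by omega)]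
          omega
        have h1 : ∀ i : ℕ, B ((M : ℤ) * r - 1 - ((i * r + t : ℕ) : ℤ)) ↔
            (i : ℤ) < M + v (t : ZMod r) := by
          intro i
          have := hB (t : ZMod r) (M - 1 - i)
          rw [hval] at this
          rw [show (M : ℤ) * r - 1 - ((i * r + t : ℕ) : ℤ) =
            r * (M - 1 - i) + (r - 1 - t) by push_cast; ring, this]
          omega
        simp only [h1]
        have h2 := abs_le.mp (hM (t : ZMod r))
        rw [Finset.sum_boole]
        have h3 : (Finset.range (2 * M)).filter (fun i : ℕ => ¬ ((i : ℤ) < M + v (t : ZMod r))) =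
            Finset.Ico (M + v (t : ZMod r)).toNat (2 * M) := by
          ext i
          simp only [Finset.mem_filter, Finset.mem_range, Finset.mem_Ico]
          omega
        rw [h3, Nat.card_Ico]
        push_cast
        omega
      rw [Finset.sum_congr rfl hrow, Finset.sum_sub_distrib]
      have h4 : ∑ t ∈ Finset.range r, v (t : ZMod r) = 0 := by
        rw [← hv]
        refine Finset.sum_bij (fun t _ => (t : ZMod r)) (fun _ _ => Finset.mem_univ _) ?_ ?_ ?_
        · intro a ha b hb h
          rw [Finset.mem_range] at ha hb
          have := congrArg ZMod.val h
          rwa [ZMod.val_natCast_of_lt ha, ZMod.val_natCast_of_lt hb] at this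
        · intro c _
          exact ⟨c.val, Finset.mem_range.mpr (ZMod.val_lt c), ZMod.natCast_zmod_val c⟩
        · intros
          rfl
      rw [h4]
      simp [mul_comm])
  refine ⟨f, hf, ?_, ?_⟩
  · rw [core_iff hf r hr0]
    intro x
    rw [hfB, hfB]
    simp only [B]
    intro h
    have : (x + r) / r = x / r + 1 := Int.add_ediv_of_dvd_right (dvd_refl _) |>.trans
      (by rw [Int.ediv_self hr.ne'])
    rw [this]
    push_cast
    rw [ZMod.natCast_self, add_zero]
    omega
  · funext c
    have := esCharge_ge (fun j : ℤ => edgeOf f (r * j + (((-1 - c : ZMod r)).val : ℤ))) (-v c)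
      (fun j => by rw [hfB, hB])
    rw [neg_neg] at this
    exact this

end Helpers

/-- The restriction of `κ` to `r`-cores coincides with the
charge-vector bijection from `r`-cores to the `sl_r` root lattice; in particular `κ`
restricted to `r`-cores is a bijection onto `Q`. -/
theorem stmt6 (r : ℕ) [NeZero r] :
    (∀ f : ℕ → ℕ, IsPartitionFun f → ¬ HasHook f r → kappa r f = chargeVec r f) ∧
    Set.BijOn (fun f : ℕ → ℕ => kappa r f)
      {f : ℕ → ℕ | IsPartitionFun f ∧ ¬ HasHook f r}
      {v : ZMod r → ℤ | ∑ i : ZMod r, v i = 0} := by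
  refine ⟨fun f hf _ => kappa_eq_chargeVec r hf, ?_, ?_, ?_⟩
  · rintro f -
    simp only [Set.mem_setOf_eq, kappa]
    rw [Finset.sum_sub_distrib, sub_eq_zero]
    exact (Equiv.sum_comp (Equiv.addRight (1 : ZMod r)) (fun c => (residueCount r f c : ℤ))).symm
  · rintro f ⟨hf, hfc⟩ g ⟨hg, hgc⟩ h
    simp only at h
    rw [kappa_eq_chargeVec r hf, kappa_eq_chargeVec r hg] at h
    refine edge_inj hf hg fun x => ?_
    obtain ⟨j, hj⟩ := (cast_iff r ((-1 - x : ℤ) : ZMod r) (-1 - x)).mp rfl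
    have hx : x = r * j + (((-1 - ((-1 - x : ℤ) : ZMod r) : ZMod r)).val : ℤ) := by
      rw [← hj]
      ring
    have h1 := core_edge r hf hfc ((-1 - x : ℤ) : ZMod r) j
    have h2 := core_edge r hg hgc ((-1 - x : ℤ) : ZMod r) j
    rw [← hx] at h1 h2
    rw [h1, h2, h]
  · intro v hv
    obtain ⟨f, hf, hfc, hfv⟩ := exists_core r v hv
    exact ⟨f, ⟨hf, hfc⟩, by simp only; rw [kappa_eq_chargeVec r hf, hfv]⟩
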